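/- For every η > 0, DEC^KL_η(𝓜, Φ) ≤ DEC^KL_η(𝓜̄(Φ)) + C(Φ). Consequently, if C(Φ) ≤ 0, then max_{ρ∈Δ(Φ)} max_{ν∈Δ(Ψ)} min_{p∈Δ(Π)} AIR^Φ_{ρ,η}(p,ν) ≤ DEC^KL_η(𝓜̄(Φ)). -/

import Mathlib

open scoped BigOperators

noncomputable section

/-- A probability distribution on a finite type, represented as a nonnegative
function summing to one. -/
structure FDist (X : Type*) [Fintype X] where
  p : X → ℝ
  nonneg : ∀ x, 0 ≤ p x
  sum_one : ∑ x, p x = 1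

/-- Kullback–Leibler divergence between two (finitely supported) distributions,
valued in `EReal`; it is `⊤` when `p` is not absolutely continuous w.r.t. `q`. -/
def KL {X : Type*} [Fintype X] (p q : X → ℝ) : EReal :=
  haveI := Classical.propDecidable (∀ x, q x = 0 → p x = 0)
  if ∀ x, q x = 0 → p x = 0 then ((∑ x, p x * Real.log (p x / q x) : ℝ) : EReal)
  else (⊤ : EReal)

section GeneralDM

variable {Pol Obs Mod I : Type*}
variable [Fintype Pol] [Fintype Obs] [Fintype Mod] [Fintype I] [DecidableEq I]

/-- Posterior distribution over the partition cells `I` given prior `ν` on `Mod × Pol`,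
after playing `π` and observing `o`. -/
def post (q : Mod → Pol → Obs → ℝ) (part : Mod × Pol → Option I)
    (ν : Mod × Pol → ℝ) (π : Pol) (o : Obs) : I → ℝ := fun i =>
  (∑ mp : Mod × Pol, if part mp = some i then ν mp * q mp.1 π o else 0) /
    (∑ mp : Mod × Pol, ν mp * q mp.1 π o)

/-- `AIR^Φ_{ρ,η}(p,ν)`. -/
def AIR (q : Mod → Pol → Obs → ℝ) (V : Mod → Pol → ℝ) (part : Mod × Pol → Option I)
    (η : ℝ) (ρ : I → ℝ) (p : Pol → ℝ) (ν : Mod × Pol → ℝ) : EReal :=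
  ((∑ π : Pol, ∑ mp : Mod × Pol, p π * ν mp * (V mp.1 mp.2 - V mp.1 π) : ℝ) : EReal)
    - ((η⁻¹ : ℝ) : EReal) *
        ∑ π : Pol, ∑ mp : Mod × Pol, ∑ o : Obs,
          ((p π * ν mp * q mp.1 π o : ℝ) : EReal) * KL (post q part ν π o) ρ

/-- `max_{ρ∈Δ(Φ)} max_{ν∈Δ(Ψ)} min_{p∈Δ(Π)} AIR^Φ_{ρ,η}(p,ν)`. -/
def AIRmaxmin (q : Mod → Pol → Obs → ℝ) (V : Mod → Pol → ℝ)
    (part : Mod × Pol → Option I) (η : ℝ) : EReal :=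
  ⨆ ρ : FDist I, ⨆ ν : {ν : FDist (Mod × Pol) // ∀ mp, part mp = none → ν.p mp = 0},
    ⨅ p : FDist Pol, AIR q V part η ρ.p p.p ν.1.p

/-- Observation distribution of the mixture model `M^μ`. -/
def mixObs (q : Mod → Pol → Obs → ℝ) (μ : Mod → ℝ) (π : Pol) : Obs → ℝ := fun o =>
  ∑ m : Mod, μ m * q m π o

/-- Observation distribution of the mixture of the model-marginal of `ν ∈ Δ(𝓜 × Π)`. -/
def pairMixObs (q : Mod → Pol → Obs → ℝ) (ν : Mod × Pol → ℝ) (π : Pol) : Obs → ℝ := fun o =>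
  ∑ mp : Mod × Pol, ν mp * q mp.1 π o

/-- The `Φ`-dependent DEC, `DEC^KL_η(𝓜, Φ)`. -/
def DECPhi (q : Mod → Pol → Obs → ℝ) (V : Mod → Pol → ℝ)
    (part : Mod × Pol → Option I) (η : ℝ) : EReal :=
  ⨆ μbar : FDist Mod, ⨅ p : FDist Pol, ⨆ i : I,
    ⨆ ν : {ν : FDist (Mod × Pol) // ∀ mp, ν.p mp ≠ 0 → part mp = some i},
      ((∑ π : Pol, p.p π *
          ((∑ mp : Mod × Pol, ν.1.p mp * V mp.1 mp.2)
            - (∑ mp : Mod × Pol, ν.1.p mp * V mp.1 π)) : ℝ) : EReal)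
        - ((η⁻¹ : ℝ) : EReal) *
            ∑ π : Pol, ((p.p π : ℝ) : EReal) * KL (pairMixObs q ν.1.p π) (mixObs q μbar.p π)

/-- `C(Φ) = max_{φ∈Φ} max_{ν∈Δ(φ)} (E_{(M,π⋆)∼ν}[V_M(π⋆)] − max_π V_{M^ν}(π))`. -/
def CPhi (V : Mod → Pol → ℝ) (part : Mod × Pol → Option I) : ℝ :=
  ⨆ i : I, ⨆ ν : {ν : FDist (Mod × Pol) // ∀ mp, ν.p mp ≠ 0 → part mp = some i},
    ((∑ mp : Mod × Pol, ν.1.p mp * V mp.1 mp.2)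
      - ⨆ π : Pol, ∑ mp : Mod × Pol, ν.1.p mp * V mp.1 π)

/-- `DEC^KL_η(𝓜̄(Φ))`: the DEC of the `Φ`-aware convexification
`𝓜̄(Φ) = ⋃_{φ∈Φ} co({M : (M,π) ∈ φ for some π})`. -/
def DECbar (q : Mod → Pol → Obs → ℝ) (V : Mod → Pol → ℝ)
    (part : Mod × Pol → Option I) (η : ℝ) : EReal :=
  ⨆ μbar : {μ : FDist Mod // ∀ m, μ.p m ≠ 0 → ∃ i : I, ∃ π : Pol, part (m, π) = some i},
    ⨅ p : FDist Pol, ⨆ i : I,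
      ⨆ μ : {μ : FDist Mod // ∀ m, μ.p m ≠ 0 → ∃ π : Pol, part (m, π) = some i},
        ((∑ π : Pol, p.p π *
            ((⨆ π' : Pol, ∑ m : Mod, μ.1.p m * V m π') - ∑ m : Mod, μ.1.p m * V m π) : ℝ) : EReal)
          - ((η⁻¹ : ℝ) : EReal) *
              ∑ π : Pol, ((p.p π : ℝ) : EReal) * KL (mixObs q μ.1.p π) (mixObs q μbar.1.p π)

/-- `DEC^KL_η(𝓜)` for the class of pure models. -/
def DECpure (q : Mod → Pol → Obs → ℝ) (V : Mod → Pol → ℝ) (η : ℝ) : EReal :=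
  ⨆ μbar : FDist Mod, ⨅ p : FDist Pol, ⨆ m : Mod,
    ((∑ π : Pol, p.p π * ((⨆ π' : Pol, V m π') - V m π) : ℝ) : EReal)
      - ((η⁻¹ : ℝ) : EReal) * ∑ π : Pol, ((p.p π : ℝ) : EReal) * KL (q m π) (mixObs q μbar.p π)

/-- `DEC^KL_η(𝓜̄(Θ))` for a total partition `Θ` of the models. -/
def DECbarTheta (q : Mod → Pol → Obs → ℝ) (V : Mod → Pol → ℝ)
    (partM : Mod → I) (η : ℝ) : EReal :=
  ⨆ μbar : FDist Mod, ⨅ p : FDist Pol, ⨆ i : I,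
    ⨆ μ : {μ : FDist Mod // ∀ m, μ.p m ≠ 0 → partM m = i},
      ((∑ π : Pol, p.p π *
          ((⨆ π' : Pol, ∑ m : Mod, μ.1.p m * V m π') - ∑ m : Mod, μ.1.p m * V m π) : ℝ) : EReal)
        - ((η⁻¹ : ℝ) : EReal) *
            ∑ π : Pol, ((p.p π : ℝ) : EReal) * KL (mixObs q μ.1.p π) (mixObs q μbar.p π)

/-- Posterior over a model partition `Θ` given prior `ν` on models. -/
def postM (q : Mod → Pol → Obs → ℝ) (partM : Mod → I) (ν : Mod → ℝ)
    (π : Pol) (o : Obs) : I → ℝ := fun i =>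
  (∑ m : Mod, if partM m = i then ν m * q m π o else 0) / (∑ m : Mod, ν m * q m π o)

/-- `InfoAIR^Θ_{ρ,η}(p, ν, π^Θ)`. -/
def InfoAIR (q : Mod → Pol → Obs → ℝ) (V : Mod → Pol → ℝ) (partM : Mod → I)
    (η : ℝ) (ρ : I → ℝ) (p : Pol → ℝ) (ν : Mod → ℝ) (πΘ : I → Pol) : EReal :=
  ((∑ π : Pol, ∑ m : Mod, p π * ν m * (V m (πΘ (partM m)) - V m π) : ℝ) : EReal)
    - ((η⁻¹ : ℝ) : EReal) *
        ∑ π : Pol, ∑ m : Mod, ∑ o : Obs,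
          ((p π * ν m * q m π o : ℝ) : EReal) * KL (postM q partM ν π o) ρ

end GeneralDM

/-!
Letting the reference `M̄` range over all of `co(𝓜)` rather than `co(𝓜̄(Φ))` does not increase the
maximum. If against `M̄` every `p` admits a mixture `M^μ ∈ 𝓜̄(Φ)` with penalized regret above `c`,
then the minimax theorem on the simplex `Δ(Π)` turns these `p`-dependent responses into one
distribution `w` over `𝓜̄(Φ)` whose average penalized regret is above `c` for every `p`. Among all
references, the mixture `∑ w M^μ`, again an average of elements of `𝓜̄(Φ)`, has the least average
divergence, namely a mutual information. Replacing `M̄` by it hence only increases the average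
penalized regret, and some `M^μ` attains the average. Passing from `E_ν[V_M(π⋆)]` to `max_π
V_{M^ν}(π)` costs at most `C(Φ)`.

For the second claim, the information term of `AIR` is at least the mutual information between the
cell of `(M, π⋆) ∼ ν` and the observation. By symmetry this is the average over the cells of the
divergence between the observation law given the cell and the observation law of `M^ν`, so some
conditional law of `ν` given a cell does at least as well in `DEC^KL_η(𝓜, Φ)` with reference `M^ν`.
-/

open scoped ENNReal

theorem KL_of_ac {X : Type*} [Fintype X] {p q : X → ℝ} (h : ∀ x, q x = 0 → p x = 0) :
    KL p q = ((∑ x, p x * Real.log (p x / q x) : ℝ) : EReal) :=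
  if_pos h

theorem KL_of_not_ac {X : Type*} [Fintype X] {p q : X → ℝ} (h : ¬∀ x, q x = 0 → p x = 0) :
    KL p q = ⊤ :=
  if_neg h

namespace FDist

variable {X Y κ : Type*} [Fintype X] [Fintype Y] [Fintype κ]

@[ext]
theorem ext {P Q : FDist X} (h : ∀ x, P.p x = Q.p x) : P = Q := by
  cases P; cases Q; congr; exact funext h

theorem sum_mul_le (w : FDist κ) {f : κ → ℝ} {B : ℝ} (h : ∀ k, f k ≤ B) :
    ∑ k, w.p k * f k ≤ B :=
  calc ∑ k, w.p k * f k ≤ ∑ k, w.p k * B :=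
        Finset.sum_le_sum fun k _ => mul_le_mul_of_nonneg_left (h k) (w.nonneg k)
    _ = B := by rw [← Finset.sum_mul, w.sum_one, one_mul]

theorem le_sum_mul (w : FDist κ) {f : κ → ℝ} {B : ℝ} (h : ∀ k, B ≤ f k) :
    B ≤ ∑ k, w.p k * f k := by
  simpa using w.sum_mul_le (f := fun k => -f k) (B := -B) fun k => neg_le_neg (h k)

theorem abs_sum_mul_le (w : FDist κ) {f : κ → ℝ} {B : ℝ} (h : ∀ k, |f k| ≤ B) :
    |∑ k, w.p k * f k| ≤ B :=
  abs_le.2 ⟨w.le_sum_mul fun k => (abs_le.1 (h k)).1, w.sum_mul_le fun k => (abs_le.1 (h k)).2⟩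

theorem sum_mul_sub (w : FDist κ) (f : κ → ℝ) (a : ℝ) :
    ∑ k, w.p k * (f k - a) = ∑ k, w.p k * f k - a := by
  simp only [mul_sub, Finset.sum_sub_distrib, ← Finset.sum_mul, w.sum_one, one_mul]

theorem exists_le_of_le_sum_mul (w : FDist κ) {f : κ → ℝ} {a : ℝ} (h : a ≤ ∑ k, w.p k * f k) :
    ∃ k, w.p k ≠ 0 ∧ a ≤ f k := by
  by_contra! hlt
  have hle (k : κ) : w.p k * f k ≤ w.p k * a := by
    rcases eq_or_ne (w.p k) 0 with hk | hk
    · simp [hk]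
    · exact mul_le_mul_of_nonneg_left (hlt k hk).le (w.nonneg k)
  obtain ⟨k, -, hk⟩ : ∃ k ∈ Finset.univ, w.p k ≠ 0 :=
    Finset.exists_ne_zero_of_sum_ne_zero (w.sum_one ▸ one_ne_zero)
  have hsum : ∑ k, w.p k * f k < ∑ k, w.p k * a :=
    Finset.sum_lt_sum (fun k _ => hle k)
      ⟨k, Finset.mem_univ k, mul_lt_mul_of_pos_left (hlt k hk) ((w.nonneg k).lt_of_ne' hk)⟩
  rw [← Finset.sum_mul, w.sum_one, one_mul] at hsum
  exact hsum.not_ge h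

theorem sum_mul_sum_comm (w : FDist κ) (p : FDist X) (a : κ → X → ℝ) :
    ∑ k, w.p k * ∑ x, p.p x * a k x = ∑ x, p.p x * ∑ k, w.p k * a k x := by
  simp only [Finset.mul_sum, mul_left_comm (w.p _)]
  exact Finset.sum_comm

theorem sum_ofReal_mul_ne_top (w : FDist κ) {D : κ → ℝ≥0∞} (h : ∀ k, D k ≠ ⊤) :
    ∑ k, ENNReal.ofReal (w.p k) * D k ≠ ⊤ :=
  ENNReal.sum_ne_top.2 fun k _ => ENNReal.mul_ne_top ENNReal.ofReal_ne_top (h k)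

theorem ne_top_of_sum_ofReal_mul_ne_top {w : FDist κ} {D : κ → ℝ≥0∞}
    (h : ∑ k, ENNReal.ofReal (w.p k) * D k ≠ ⊤) {k : κ} (hk : w.p k ≠ 0) : D k ≠ ⊤ := by
  intro hD
  refine ENNReal.sum_ne_top.1 h k (Finset.mem_univ k) ?_
  rw [hD, ENNReal.mul_top (ENNReal.ofReal_ne_zero_iff.2 ((w.nonneg k).lt_of_ne' hk))]

/-! ### Mixtures -/

/-- The mixture `∑ k, w k • P k`, i.e. the law of `x ∼ P k` with `k ∼ w`. -/
def mix (w : FDist κ) (P : κ → FDist X) : FDist X where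
  p x := ∑ k, w.p k * (P k).p x
  nonneg x := Finset.sum_nonneg fun k _ => mul_nonneg (w.nonneg k) ((P k).nonneg x)
  sum_one := by
    rw [Finset.sum_comm]
    simp only [← Finset.mul_sum, sum_one, mul_one]

theorem sum_mix_mul (w : FDist κ) (P : κ → FDist X) (f : X → ℝ) :
    ∑ x, (w.mix P).p x * f x = ∑ k, w.p k * ∑ x, (P k).p x * f x := by
  simp only [mix, Finset.sum_mul, Finset.mul_sum, mul_assoc]
  exact Finset.sum_comm

theorem mix_mix (w : FDist κ) (P : κ → FDist X) (R : X → FDist Y) :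
    (w.mix P).mix R = w.mix fun k => (P k).mix R :=
  FDist.ext fun y => w.sum_mix_mul P fun x => (R x).p y

theorem eq_zero_of_mix_eq_zero (w : FDist κ) (P : κ → FDist X) {k : κ} (hk : w.p k ≠ 0) {x : X}
    (hx : (w.mix P).p x = 0) : (P k).p x = 0 := by
  have hterms := (Finset.sum_eq_zero_iff_of_nonneg fun k _ =>
    mul_nonneg (w.nonneg k) ((P k).nonneg x)).1 hx
  exact (mul_eq_zero.1 (hterms k (Finset.mem_univ k))).resolve_left hk

theorem exists_ne_zero_of_mix_ne_zero {w : FDist κ} {P : κ → FDist X} {x : X}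
    (hx : (w.mix P).p x ≠ 0) : ∃ k, w.p k ≠ 0 ∧ (P k).p x ≠ 0 := by
  obtain ⟨k, -, hk⟩ := Finset.exists_ne_zero_of_sum_ne_zero hx
  exact ⟨k, mul_ne_zero_iff.1 hk⟩

/-- The first marginal. -/
def fst (ν : FDist (X × Y)) : FDist X where
  p x := ∑ y, ν.p (x, y)
  nonneg x := Finset.sum_nonneg fun y _ => ν.nonneg (x, y)
  sum_one := by rw [← Fintype.sum_prod_type, ν.sum_one]

theorem sum_fst_mul (ν : FDist (X × Y)) (f : X → ℝ) :
    ∑ x, ν.fst.p x * f x = ∑ xy, ν.p xy * f xy.1 := by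
  simp only [fst, Finset.sum_mul, Fintype.sum_prod_type]

theorem fst_mix (ν : FDist (X × Y)) (R : X → FDist κ) :
    ν.fst.mix R = ν.mix fun xy => R xy.1 :=
  FDist.ext fun k => ν.sum_fst_mul fun x => (R x).p k

/-- The point mass at `x`. -/
protected def pure [DecidableEq X] (x : X) : FDist X where
  p := Pi.single x 1
  nonneg := fun y => (Pi.single_nonneg.2 zero_le_one : (0 : X → ℝ) ≤ Pi.single x 1) y
  sum_one := Fintype.sum_pi_single' x 1

/-! ### Kullback–Leibler divergence -/

theorem sum_mul_log_div_nonneg (P Q : FDist X) (h : ∀ x, Q.p x = 0 → P.p x = 0) :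
    0 ≤ ∑ x, P.p x * Real.log (P.p x / Q.p x) := by
  have hterm (x : X) : Q.p x * InformationTheory.klFun (P.p x / Q.p x) =
      P.p x * Real.log (P.p x / Q.p x) + Q.p x - P.p x := by
    rcases eq_or_ne (Q.p x) 0 with hx | hx
    · simp [hx, h x hx]
    · rw [InformationTheory.klFun_apply]
      field_simp
  calc 0 ≤ ∑ x, Q.p x * InformationTheory.klFun (P.p x / Q.p x) :=
        Finset.sum_nonneg fun x _ => mul_nonneg (Q.nonneg x)
          (InformationTheory.klFun_nonneg (div_nonneg (P.nonneg x) (Q.nonneg x)))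
    _ = ∑ x, P.p x * Real.log (P.p x / Q.p x) := by
        simp only [hterm, Finset.sum_sub_distrib, Finset.sum_add_distrib, sum_one,
          add_sub_cancel_right]

/-- The divergence `KL P.p Q.p` of two distributions, which is nonnegative, as an element of
`ℝ≥0∞`. -/
def kl (P Q : FDist X) : ℝ≥0∞ := (KL P.p Q.p).toENNReal

theorem coe_kl (P Q : FDist X) : (P.kl Q : EReal) = KL P.p Q.p := by
  refine EReal.coe_toENNReal ?_
  by_cases h : ∀ x, Q.p x = 0 → P.p x = 0
  · rw [KL_of_ac h]
    exact_mod_cast sum_mul_log_div_nonneg P Q h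
  · rw [KL_of_not_ac h]
    exact le_top

theorem kl_eq_ofReal {P Q : FDist X} (h : ∀ x, Q.p x = 0 → P.p x = 0) :
    P.kl Q = ENNReal.ofReal (∑ x, P.p x * Real.log (P.p x / Q.p x)) := by
  rw [kl, KL_of_ac h, EReal.toENNReal_of_ne_top (EReal.coe_ne_top _), EReal.toReal_coe]

theorem ac_of_kl_ne_top {P Q : FDist X} (h : P.kl Q ≠ ⊤) : ∀ x, Q.p x = 0 → P.p x = 0 := by
  contrapose! h
  rw [kl, KL_of_not_ac (by push Not; exact h), EReal.toENNReal_top]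

/-! ### Mutual information -/

theorem sum_ofReal_mul_kl (w : FDist κ) (P : κ → FDist X) (Q : FDist X)
    (h : ∀ k, w.p k ≠ 0 → ∀ x, Q.p x = 0 → (P k).p x = 0) :
    ∑ k, ENNReal.ofReal (w.p k) * (P k).kl Q =
      ENNReal.ofReal (∑ k, ∑ x, w.p k * (P k).p x * Real.log ((P k).p x / Q.p x)) := by
  have hterm (k : κ) : ∑ x, w.p k * (P k).p x * Real.log ((P k).p x / Q.p x) =
      w.p k * ∑ x, (P k).p x * Real.log ((P k).p x / Q.p x) := by
    simp only [Finset.mul_sum, mul_assoc]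
  have hnonneg (k : κ) : 0 ≤ w.p k * ∑ x, (P k).p x * Real.log ((P k).p x / Q.p x) := by
    rcases eq_or_ne (w.p k) 0 with hk | hk
    · simp [hk]
    · exact mul_nonneg (w.nonneg k) (sum_mul_log_div_nonneg (P k) Q (h k hk))
  simp only [hterm]
  rw [ENNReal.ofReal_sum_of_nonneg fun k _ => hnonneg k]
  refine Finset.sum_congr rfl fun k _ => ?_
  rcases eq_or_ne (w.p k) 0 with hk | hk
  · simp [hk]
  · rw [kl_eq_ofReal (h k hk), ENNReal.ofReal_mul (w.nonneg k)]

/-- The mutual information between `k ∼ w` and `x ∼ P k`. -/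
def mutualInfo (w : FDist κ) (P : κ → FDist X) : ℝ≥0∞ :=
  ∑ k, ENNReal.ofReal (w.p k) * (P k).kl (w.mix P)

theorem mutualInfo_eq_ofReal (w : FDist κ) (P : κ → FDist X) :
    w.mutualInfo P =
      ENNReal.ofReal (∑ k, ∑ x, w.p k * (P k).p x * Real.log ((P k).p x / (w.mix P).p x)) :=
  w.sum_ofReal_mul_kl P (w.mix P) fun _ hk _ hx => eq_zero_of_mix_eq_zero w P hk hx

theorem sum_mul_log_div_eq_add (w : FDist κ) (P : κ → FDist X) (Q : FDist X)
    (h : ∀ k, w.p k ≠ 0 → ∀ x, Q.p x = 0 → (P k).p x = 0) :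
    ∑ k, ∑ x, w.p k * (P k).p x * Real.log ((P k).p x / Q.p x) =
      ∑ k, ∑ x, w.p k * (P k).p x * Real.log ((P k).p x / (w.mix P).p x) +
        ∑ x, (w.mix P).p x * Real.log ((w.mix P).p x / Q.p x) := by
  have hterm (k : κ) (x : X) : w.p k * (P k).p x * Real.log ((P k).p x / Q.p x) =
      w.p k * (P k).p x * Real.log ((P k).p x / (w.mix P).p x) +
        w.p k * (P k).p x * Real.log ((w.mix P).p x / Q.p x) := by
    rcases eq_or_ne (w.p k) 0 with hk | hk
    · simp [hk]
    rcases eq_or_ne ((P k).p x) 0 with hx | hx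
    · simp [hx]
    have hmix : (w.mix P).p x ≠ 0 := mt (eq_zero_of_mix_eq_zero w P hk) hx
    have hQ : Q.p x ≠ 0 := mt (h k hk x) hx
    rw [← mul_add, ← Real.log_mul (div_ne_zero hx hmix) (div_ne_zero hmix hQ),
      div_mul_div_cancel₀ hmix]
  simp only [hterm, Finset.sum_add_distrib, sum_mix_mul, Finset.mul_sum, mul_assoc]

theorem mutualInfo_le_sum_kl (w : FDist κ) (P : κ → FDist X) (Q : FDist X) :
    w.mutualInfo P ≤ ∑ k, ENNReal.ofReal (w.p k) * (P k).kl Q := by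
  rcases eq_or_ne (∑ k, ENNReal.ofReal (w.p k) * (P k).kl Q) ⊤ with htop | htop
  · exact htop ▸ le_top
  have hac (k : κ) (hk : w.p k ≠ 0) : ∀ x, Q.p x = 0 → (P k).p x = 0 :=
    ac_of_kl_ne_top (ne_top_of_sum_ofReal_mul_ne_top htop hk)
  rw [mutualInfo_eq_ofReal, sum_ofReal_mul_kl w P Q hac, sum_mul_log_div_eq_add w P Q hac]
  refine ENNReal.ofReal_le_ofReal (le_add_of_nonneg_right (sum_mul_log_div_nonneg _ _ ?_))
  intro x hx
  by_contra hmix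
  obtain ⟨k, hk, hPx⟩ := exists_ne_zero_of_mix_ne_zero hmix
  exact hPx (hac k hk x hx)

/-- The law of `k` given `x`, where `k ∼ w` and `x ∼ P k`. If `x` has probability `0`, it is by
convention the prior `w`. -/
def posterior (w : FDist κ) (P : κ → FDist X) (x : X) : FDist κ :=
  if hx : (w.mix P).p x = 0 then w else
    { p := fun k => w.p k * (P k).p x / (w.mix P).p x
      nonneg := fun k =>
        div_nonneg (mul_nonneg (w.nonneg k) ((P k).nonneg x)) ((w.mix P).nonneg x)
      sum_one := by rw [← Finset.sum_div]; exact div_self hx }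

theorem posterior_apply {w : FDist κ} {P : κ → FDist X} {x : X} (hx : (w.mix P).p x ≠ 0) (k : κ) :
    (w.posterior P x).p k = w.p k * (P k).p x / (w.mix P).p x := by
  rw [posterior, dif_neg hx]

theorem mix_mul_posterior (w : FDist κ) (P : κ → FDist X) (x : X) (k : κ) :
    (w.mix P).p x * (w.posterior P x).p k = w.p k * (P k).p x := by
  by_cases hx : (w.mix P).p x = 0
  · rcases eq_or_ne (w.p k) 0 with hk | hk
    · simp [hx, hk]
    · simp [hx, eq_zero_of_mix_eq_zero w P hk hx]
  · rw [posterior_apply hx, mul_div_cancel₀ _ hx]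

theorem mix_posterior (w : FDist κ) (P : κ → FDist X) : (w.mix P).mix (w.posterior P) = w := by
  ext k
  calc ∑ x, (w.mix P).p x * (w.posterior P x).p k = ∑ x, w.p k * (P k).p x :=
        Finset.sum_congr rfl fun x _ => mix_mul_posterior w P x k
    _ = w.p k := by rw [← Finset.mul_sum, sum_one, mul_one]

theorem mutualInfo_posterior (w : FDist κ) (P : κ → FDist X) :
    (w.mix P).mutualInfo (w.posterior P) = w.mutualInfo P := by
  rw [mutualInfo_eq_ofReal, mutualInfo_eq_ofReal, mix_posterior, Finset.sum_comm]
  congr! 3 with k _ x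
  rw [mix_mul_posterior]
  rcases eq_or_ne (w.p k * (P k).p x) 0 with hkx | hkx
  · simp [hkx]
  obtain ⟨hk, hPx⟩ := mul_ne_zero_iff.1 hkx
  have hmix : (w.mix P).p x ≠ 0 := mt (eq_zero_of_mix_eq_zero w P hk) hPx
  rw [posterior_apply hmix]
  field_simp

theorem mutualInfo_le_sum_kl_posterior (w : FDist κ) (P : κ → FDist X) (ρ : FDist κ) :
    w.mutualInfo P ≤ ∑ x, ENNReal.ofReal ((w.mix P).p x) * (w.posterior P x).kl ρ :=
  mutualInfo_posterior w P ▸ mutualInfo_le_sum_kl _ _ ρ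

end FDist

/-! ### Information-penalized gains -/

/-- The gain `G` penalized by `η⁻¹` times the information cost `E`, hence `⊥` for `0 < η` and
`E = ⊤`. -/
def netGain (η G : ℝ) (E : ℝ≥0∞) : EReal := (G : EReal) - ((η⁻¹ : ℝ) : EReal) * (E : EReal)

section NetGain

variable {η : ℝ}

theorem netGain_of_ne_top (G : ℝ) {E : ℝ≥0∞} (hE : E ≠ ⊤) :
    netGain η G E = ((G - η⁻¹ * E.toReal : ℝ) : EReal) := by
  rw [netGain, ← EReal.coe_ennreal_toReal hE]
  norm_cast

theorem netGain_top (hη : 0 < η) (G : ℝ) : netGain η G ⊤ = ⊥ := by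
  rw [netGain, EReal.coe_ennreal_top, EReal.coe_mul_top_of_pos (inv_pos.2 hη), EReal.sub_top]

theorem ne_top_of_lt_netGain (hη : 0 < η) {x : EReal} {G : ℝ} {E : ℝ≥0∞}
    (h : x < netGain η G E) : E ≠ ⊤ := by
  rintro rfl
  exact not_lt_bot (netGain_top hη G ▸ h)

theorem netGain_mono (hη : 0 < η) {G G' : ℝ} {E E' : ℝ≥0∞} (hG : G ≤ G') (hE : E' ≤ E) :
    netGain η G E ≤ netGain η G' E' :=
  EReal.sub_le_sub (EReal.coe_le_coe_iff.2 hG) (mul_le_mul_of_nonneg_left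
    (EReal.coe_ennreal_le_coe_ennreal_iff.2 hE) (EReal.coe_nonneg.2 (inv_nonneg.2 hη.le)))

theorem netGain_add (G C : ℝ) (E : ℝ≥0∞) : netGain η (G + C) E = netGain η G E + (C : EReal) := by
  rw [netGain, netGain, EReal.coe_add, sub_eq_add_neg, sub_eq_add_neg, add_right_comm]

theorem netGain_sum {κ : Type*} [Fintype κ] (w : FDist κ) (g : κ → ℝ) {D : κ → ℝ≥0∞}
    (h : ∑ k, ENNReal.ofReal (w.p k) * D k ≠ ⊤) :
    netGain η (∑ k, w.p k * g k) (∑ k, ENNReal.ofReal (w.p k) * D k) =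
      ((∑ k, w.p k * (g k - η⁻¹ * (D k).toReal) : ℝ) : EReal) := by
  have htoReal : (∑ k, ENNReal.ofReal (w.p k) * D k).toReal = ∑ k, w.p k * (D k).toReal := by
    rw [ENNReal.toReal_sum fun k hk => ENNReal.sum_ne_top.1 h k hk]
    simp only [ENNReal.toReal_mul, ENNReal.toReal_ofReal (w.nonneg _)]
  rw [netGain_of_ne_top _ h, htoReal]
  simp only [mul_sub, Finset.sum_sub_distrib, Finset.mul_sum, mul_left_comm]

theorem exists_netGain_sum_le {κ : Type*} [Fintype κ] (hη : 0 < η) (w : FDist κ) (g : κ → ℝ)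
    {D : κ → ℝ≥0∞} {E : ℝ≥0∞} (hDE : ∑ k, ENNReal.ofReal (w.p k) * D k ≤ E) :
    ∃ k, w.p k ≠ 0 ∧ netGain η (∑ k, w.p k * g k) E ≤ netGain η (g k) (D k) := by
  rcases eq_or_ne E ⊤ with rfl | hE
  · obtain ⟨k, hk, -⟩ := w.exists_le_of_le_sum_mul (le_refl (∑ k, w.p k * g k))
    exact ⟨k, hk, netGain_top hη _ ▸ bot_le⟩
  have hsum := ne_top_of_le_ne_top hE hDE
  obtain ⟨k, hk, hle⟩ :=
    w.exists_le_of_le_sum_mul (le_refl (∑ k, w.p k * (g k - η⁻¹ * (D k).toReal)))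
  refine ⟨k, hk, (netGain_mono hη le_rfl hDE).trans ?_⟩
  rw [netGain_sum w g hsum, netGain_of_ne_top _ (FDist.ne_top_of_sum_ofReal_mul_ne_top hsum hk)]
  exact EReal.coe_le_coe_iff.2 hle

end NetGain

theorem ereal_coe_ennreal_sum {ι : Type*} (s : Finset ι) (f : ι → ℝ≥0∞) :
    ((∑ i ∈ s, f i : ℝ≥0∞) : EReal) = ∑ i ∈ s, (f i : EReal) :=
  map_sum (⟨⟨(↑), EReal.coe_ennreal_zero⟩, EReal.coe_ennreal_add⟩ : ℝ≥0∞ →+ EReal) f s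

theorem FDist.coe_ofReal_mul_kl {X : Type*} [Fintype X] {a : ℝ} (ha : 0 ≤ a) (P Q : FDist X) :
    ((ENNReal.ofReal a * P.kl Q : ℝ≥0∞) : EReal) = (a : EReal) * KL P.p Q.p := by
  rw [EReal.coe_ennreal_mul, EReal.coe_ennreal_ofReal, max_eq_left ha, FDist.coe_kl]

section ExpectedKL

variable {Pol Obs : Type*} [Fintype Pol] [Fintype Obs]

/-- The expected information cost `E_{π ∼ p} KL(P(·|π), Q(·|π))`. -/
def expectedKL (p : FDist Pol) (P Q : Pol → FDist Obs) : ℝ≥0∞ :=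
  ∑ π, ENNReal.ofReal (p.p π) * (P π).kl (Q π)

theorem netGain_expectedKL (η G : ℝ) (p : FDist Pol) (P Q : Pol → FDist Obs) :
    netGain η G (expectedKL p P Q) =
      (G : EReal) - ((η⁻¹ : ℝ) : EReal) * ∑ π, (p.p π : EReal) * KL (P π).p (Q π).p := by
  simp only [netGain, expectedKL, ereal_coe_ennreal_sum, FDist.coe_ofReal_mul_kl (p.nonneg _)]

theorem sum_mul_expectedKL_mix {κ : Type*} [Fintype κ] (w : FDist κ) (p : FDist Pol)
    (P : κ → Pol → FDist Obs) :
    ∑ k, ENNReal.ofReal (w.p k) * expectedKL p (P k) (fun π => w.mix fun k => P k π) =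
      ∑ π, ENNReal.ofReal (p.p π) * w.mutualInfo fun k => P k π := by
  simp only [expectedKL, FDist.mutualInfo, Finset.mul_sum]
  rw [Finset.sum_comm]
  simp only [mul_left_comm]

theorem sum_mul_expectedKL_mix_le {κ : Type*} [Fintype κ] (w : FDist κ) (p : FDist Pol)
    (P : κ → Pol → FDist Obs) (Q : Pol → FDist Obs) :
    ∑ k, ENNReal.ofReal (w.p k) * expectedKL p (P k) (fun π => w.mix fun k => P k π) ≤
      ∑ k, ENNReal.ofReal (w.p k) * expectedKL p (P k) Q :=
  calc _ = ∑ π, ENNReal.ofReal (p.p π) * w.mutualInfo fun k => P k π :=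
        sum_mul_expectedKL_mix w p P
    _ ≤ ∑ π, ENNReal.ofReal (p.p π) * ∑ k, ENNReal.ofReal (w.p k) * (P k π).kl (Q π) := by
        gcongr with π
        exact w.mutualInfo_le_sum_kl _ _
    _ = _ := by
        simp only [expectedKL, Finset.mul_sum]
        rw [Finset.sum_comm]
        simp only [mul_left_comm]

end ExpectedKL

/-! ### Minimax over the simplex -/

section Minimax

variable {ι : Type*} [Fintype ι]

theorem exists_finite_subset_forall_lt_dotProduct {S : Set (ι → ℝ)} {c : ℝ}
    (h : ∀ p ∈ stdSimplex ℝ ι, ∃ y ∈ S, c < p ⬝ᵥ y) :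
    ∃ T ⊆ S, T.Finite ∧ ∀ p ∈ stdSimplex ℝ ι, ∃ y ∈ T, c < p ⬝ᵥ y := by
  have hopen (y : ι → ℝ) : IsOpen {p : ι → ℝ | c < p ⬝ᵥ y} :=
    isOpen_lt continuous_const (continuous_id.dotProduct continuous_const)
  obtain ⟨T, hTS, hT, hcover⟩ := (isCompact_stdSimplex ℝ ι).elim_finite_subcover_image
    (b := S) (c := fun y => {p | c < p ⬝ᵥ y}) (fun y _ => hopen y) fun p hp =>
      Set.mem_iUnion₂.2 (by simpa using h p hp)
  exact ⟨T, hTS, hT, fun p hp => by simpa using hcover hp⟩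

theorem exists_mem_convexHull_forall_lt [Nonempty ι] {S : Set (ι → ℝ)} {c : ℝ}
    (h : ∀ p ∈ stdSimplex ℝ ι, ∃ y ∈ S, c < p ⬝ᵥ y) :
    ∃ y ∈ convexHull ℝ S, ∀ i, c < y i := by
  classical
  obtain ⟨T, hTS, hT, hcover⟩ := exists_finite_subset_forall_lt_dotProduct h
  have hne : (stdSimplex ℝ ι).Nonempty := ⟨_, single_mem_stdSimplex ℝ (Classical.arbitrary ι)⟩
  have hcont : Continuous fun z : (ι → ℝ) × (ι → ℝ) => z.1 ⬝ᵥ z.2 :=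
    continuous_fst.dotProduct continuous_snd
  have hleft (y : ι → ℝ) : IsLinearMap ℝ fun p : ι → ℝ => p ⬝ᵥ y :=
    ⟨fun p p' => add_dotProduct p p' y, fun a p => smul_dotProduct a p y⟩
  have hright (p : ι → ℝ) : IsLinearMap ℝ fun y : ι → ℝ => p ⬝ᵥ y :=
    ⟨dotProduct_add p, fun a y => dotProduct_smul a p y⟩
  obtain ⟨y, hy, hlt⟩ := Sion.exists_lt_iInf_of_lt_iInf_of_finite
    (f := fun p y : ι → ℝ => p ⬝ᵥ y) (Y := convexHull ℝ S) hne (isCompact_stdSimplex ℝ ι)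
    (fun y _ => (hcont.comp (.prodMk_left y)).lowerSemicontinuous.lowerSemicontinuousOn _)
    (fun y _ => ((hleft y).mk' _).convexOn (convex_stdSimplex ℝ ι) |>.quasiconvexOn)
    (convex_convexHull ℝ S)
    (fun p _ => (hcont.comp (.prodMk_right p)).upperSemicontinuous.upperSemicontinuousOn _)
    (fun p _ => ((hright p).mk' _).concaveOn (convex_convexHull ℝ S) |>.quasiconcaveOn)
    (convex_stdSimplex ℝ ι) hT (hTS.trans (subset_convexHull ℝ S)) hcover
  exact ⟨y, hy, fun i => by simpa using hlt _ (single_mem_stdSimplex ℝ i)⟩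

theorem exists_lt_dotProduct_of_forall_pos [Nonempty ι] {S : Set (ι → ℝ)} {B c c' : ℝ}
    (hB : ∀ y ∈ S, ∀ i, y i ≤ B) (hc : c' < c)
    (h : ∀ p ∈ stdSimplex ℝ ι, (∀ i, 0 < p i) → ∃ y ∈ S, c < p ⬝ᵥ y) :
    ∀ p ∈ stdSimplex ℝ ι, ∃ y ∈ S, c' < p ⬝ᵥ y := by
  intro p hp
  set r : FDist ι := ⟨fun _ => (Fintype.card ι : ℝ)⁻¹, fun _ => by positivity, by simp⟩ with hr
  have hrB (y) (hy : y ∈ S) : r.p ⬝ᵥ y ≤ B := r.sum_mul_le (hB y hy)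
  have hrpos (i : ι) : 0 < r.p i := by simp [hr, Fintype.card_pos]
  have hcB : c < B := by
    obtain ⟨y, hy, hlt⟩ := h r.p ⟨r.nonneg, r.sum_one⟩ hrpos
    exact hlt.trans_le (hrB y hy)
  -- The weight `δ` of the uniform distribution `r` is chosen so that `(1 - δ) * c' + δ * B = c`.
  set δ := (c - c') / (B - c')
  have hden : 0 < B - c' := by linarith
  have hδ0 : 0 < δ := div_pos (sub_pos.2 hc) hden
  have hδ1 : δ < 1 := (div_lt_one hden).2 (by linarith)
  have hδc : δ * (B - c') = c - c' := div_mul_cancel₀ _ hden.ne'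
  obtain ⟨y, hy, hlt⟩ := h ((1 - δ) • p + δ • r.p)
    (convex_stdSimplex ℝ ι hp ⟨r.nonneg, r.sum_one⟩ (sub_nonneg.2 hδ1.le) hδ0.le (by ring))
    fun i => add_pos_of_nonneg_of_pos (mul_nonneg (sub_nonneg.2 hδ1.le) (hp.1 i))
      (mul_pos hδ0 (hrpos i))
  rw [add_dotProduct, smul_dotProduct, smul_dotProduct, smul_eq_mul, smul_eq_mul] at hlt
  refine ⟨y, hy, lt_of_mul_lt_mul_left ?_ (sub_nonneg.2 hδ1.le)⟩
  linarith [mul_le_mul_of_nonneg_left (hrB y hy) hδ0.le]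

end Minimax

/-! ### Replacing the reference by a mixture -/

section MixReference

variable {K Pol Obs : Type*} [Fintype Pol] [Fintype Obs] {η c c' B : ℝ}
  {P : K → Pol → FDist Obs} {Q : Pol → FDist Obs} {g : K → Pol → ℝ}

theorem exists_mixture_lt_sum [Nonempty Pol] (hη : 0 < η) (hB : ∀ k π, g k π ≤ B) (hc : c' < c)
    (h : ∀ p : FDist Pol, ∃ k,
      (c : EReal) < netGain η (∑ π, p.p π * g k π) (expectedKL p (P k) Q)) :
    ∃ (ι : Type) (_ : Fintype ι) (w : FDist ι) (z : ι → K),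
      (∀ j π, (P (z j) π).kl (Q π) ≠ ⊤) ∧
      ∀ π, c' < ∑ j, w.p j * (g (z j) π - η⁻¹ * ((P (z j) π).kl (Q π)).toReal) := by
  set payoff : K → Pol → ℝ := fun k π => g k π - η⁻¹ * ((P k π).kl (Q π)).toReal
  set S : Set (Pol → ℝ) := payoff '' {k | ∀ π, (P k π).kl (Q π) ≠ ⊤}
  have hSB : ∀ y ∈ S, ∀ π, y π ≤ B := by
    rintro _ ⟨k, -, rfl⟩ π
    exact (sub_le_self _ (mul_nonneg (inv_pos.2 hη).le ENNReal.toReal_nonneg)).trans (hB k π)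
  have hpos : ∀ p ∈ stdSimplex ℝ Pol, (∀ π, 0 < p π) → ∃ y ∈ S, c < p ⬝ᵥ y := by
    intro p hp hp0
    obtain ⟨k, hk⟩ := h ⟨p, hp.1, hp.2⟩
    have hE := ne_top_of_lt_netGain hη hk
    have hkl (π : Pol) : (P k π).kl (Q π) ≠ ⊤ :=
      FDist.ne_top_of_sum_ofReal_mul_ne_top hE (hp0 π).ne'
    rw [expectedKL, netGain_sum _ _ hE, EReal.coe_lt_coe_iff] at hk
    exact ⟨payoff k, ⟨k, hkl, rfl⟩, hk⟩
  obtain ⟨y, hy, hlt⟩ :=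
    exists_mem_convexHull_forall_lt (exists_lt_dotProduct_of_forall_pos hSB hc hpos)
  obtain ⟨ι, _, w, v, hw0, hw1, hv, rfl⟩ := mem_convexHull_iff_exists_fintype.1 hy
  choose z hz hzv using hv
  refine ⟨ι, ‹_›, ⟨w, hw0, hw1⟩, z, hz, fun π => (hlt π).trans_eq ?_⟩
  simp only [Finset.sum_apply, Pi.smul_apply, smul_eq_mul, ← hzv, payoff]

theorem exists_mixture_le_netGain [Nonempty Pol] (hη : 0 < η) (hB : ∀ k π, g k π ≤ B) (hc : c' < c)
    (h : ∀ p : FDist Pol, ∃ k,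
      (c : EReal) < netGain η (∑ π, p.p π * g k π) (expectedKL p (P k) Q)) :
    ∃ (ι : Type) (_ : Fintype ι) (w : FDist ι) (z : ι → K), ∀ p : FDist Pol, ∃ j,
      (c' : EReal) ≤ netGain η (∑ π, p.p π * g (z j) π)
        (expectedKL p (P (z j)) fun π => w.mix fun j => P (z j) π) := by
  obtain ⟨ι, _, w, z, hkl, hlt⟩ := exists_mixture_lt_sum hη hB hc h
  refine ⟨ι, ‹_›, w, z, fun p => ?_⟩
  obtain ⟨j, -, hj⟩ := exists_netGain_sum_le hη w (fun j => ∑ π, p.p π * g (z j) π)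
    (sum_mul_expectedKL_mix_le w p (fun j => P (z j)) Q)
  refine ⟨j, le_trans ?_ hj⟩
  have hE (j : ι) : expectedKL p (P (z j)) Q ≠ ⊤ := p.sum_ofReal_mul_ne_top (hkl j)
  have hsum : ∑ j, w.p j * (∑ π, p.p π * g (z j) π - η⁻¹ * (expectedKL p (P (z j)) Q).toReal) =
      ∑ π, p.p π * ∑ j, w.p j * (g (z j) π - η⁻¹ * ((P (z j) π).kl (Q π)).toReal) := by
    rw [← FDist.sum_mul_sum_comm]
    refine Finset.sum_congr rfl fun j _ => congrArg (w.p j * ·) (EReal.coe_injective ?_)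
    rw [← netGain_of_ne_top _ (hE j), expectedKL, netGain_sum _ _ (hE j)]
  rw [netGain_sum w _ (w.sum_ofReal_mul_ne_top hE), hsum, EReal.coe_le_coe_iff]
  exact p.le_sum_mul fun π => (hlt π).le

end MixReference

/-! ### Decision-estimation coefficients of kernels -/

section DEC

variable {Pol Obs Mod I : Type*} [Fintype Pol] [Fintype Obs] [Fintype Mod]

/-- The value that `π` loses against an optimal policy, in the mixture of models `M^μ`. -/
def regret (V : Mod → Pol → ℝ) (μ : FDist Mod) (π : Pol) : ℝ :=
  (⨆ π', ∑ m, μ.p m * V m π') - ∑ m, μ.p m * V m π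

/-- The expected value that `π` loses against the policy `π⋆`, where `(M, π⋆) ∼ ν`. -/
def pairRegret (V : Mod → Pol → ℝ) (ν : FDist (Mod × Pol)) (π : Pol) : ℝ :=
  ∑ mp, ν.p mp * V mp.1 mp.2 - ∑ mp, ν.p mp * V mp.1 π

theorem pairRegret_eq_sum (V : Mod → Pol → ℝ) (ν : FDist (Mod × Pol)) (π : Pol) :
    pairRegret V ν π = ∑ mp, ν.p mp * (V mp.1 mp.2 - V mp.1 π) := by
  simp only [pairRegret, mul_sub, Finset.sum_sub_distrib]

theorem abs_apply_apply_le_norm (V : Mod → Pol → ℝ) (m : Mod) (π : Pol) : |V m π| ≤ ‖V‖ :=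
  (norm_le_pi_norm (V m) π).trans (norm_le_pi_norm V m)

theorem regret_le [Nonempty Pol] (V : Mod → Pol → ℝ) (μ : FDist Mod) (π : Pol) :
    regret V μ π ≤ ‖V‖ + ‖V‖ := by
  have hvalue (π' : Pol) := abs_le.1 (μ.abs_sum_mul_le fun m => abs_apply_apply_le_norm V m π')
  exact (sub_le_sub (ciSup_le fun π' => (hvalue π').2) (hvalue π).1).trans_eq (sub_neg_eq_add _ _)

theorem regret_nonneg {Pol : Type*} [Finite Pol] (V : Mod → Pol → ℝ) (μ : FDist Mod) (π : Pol) :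
    0 ≤ regret V μ π :=
  sub_nonneg.2 (le_ciSup (f := fun π' => ∑ m, μ.p m * V m π') (Set.finite_range _).bddAbove π)

theorem pairRegret_le (V : Mod → Pol → ℝ) (ν : FDist (Mod × Pol)) (π : Pol) :
    pairRegret V ν π ≤ ‖V‖ + ‖V‖ :=
  (sub_le_sub (abs_le.1 (ν.abs_sum_mul_le fun mp => abs_apply_apply_le_norm V mp.1 mp.2)).2
    (abs_le.1 (ν.abs_sum_mul_le fun mp => abs_apply_apply_le_norm V mp.1 π)).1).trans_eq
    (sub_neg_eq_add _ _)

theorem pairRegret_sub_regret_fst (V : Mod → Pol → ℝ) (ν : FDist (Mod × Pol)) (π : Pol) :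
    pairRegret V ν π - regret V ν.fst π =
      ∑ mp, ν.p mp * V mp.1 mp.2 - ⨆ π', ∑ mp, ν.p mp * V mp.1 π' := by
  simp only [pairRegret, regret, ν.sum_fst_mul fun m => V m _]
  ring

theorem pairRegret_sub_CPhi_le (V : Mod → Pol → ℝ) (part : Mod × Pol → Option I) {i : I}
    {ν : FDist (Mod × Pol)} (hν : ∀ mp, ν.p mp ≠ 0 → part mp = some i) (π : Pol) :
    pairRegret V ν π - CPhi V part ≤ regret V ν.fst π := by
  have hbound (ν : FDist (Mod × Pol)) :
      ∑ mp, ν.p mp * V mp.1 mp.2 - ⨆ π', ∑ mp, ν.p mp * V mp.1 π' ≤ ‖V‖ + ‖V‖ := by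
    rw [← pairRegret_sub_regret_fst V ν π]
    linarith [pairRegret_le V ν π, regret_nonneg V ν.fst π]
  let cell (i : I) := {ν : FDist (Mod × Pol) // ∀ mp, ν.p mp ≠ 0 → part mp = some i}
  let slack (i : I) (ν : cell i) : ℝ :=
    ∑ mp, ν.1.p mp * V mp.1 mp.2 - ⨆ π', ∑ mp, ν.1.p mp * V mp.1 π'
  have hcell (i : I) : ⨆ ν, slack i ν ≤ ‖V‖ + ‖V‖ :=
    Real.iSup_le (fun ν => hbound ν.1) (by positivity)
  rw [sub_le_comm, pairRegret_sub_regret_fst]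
  calc slack i ⟨ν, hν⟩ ≤ ⨆ ν, slack i ν :=
        le_ciSup (f := slack i) ⟨_, Set.forall_mem_range.2 fun ν => hbound ν.1⟩ ⟨ν, hν⟩
    _ ≤ ⨆ i, ⨆ ν, slack i ν :=
        le_ciSup (f := fun i => ⨆ ν, slack i ν) ⟨_, Set.forall_mem_range.2 hcell⟩ i

/-- The `Φ`-aware convexification `𝓜̄(Φ)`: a cell together with a mixture of models from that
cell. -/
abbrev CellMixture (part : Mod × Pol → Option I) : Type _ :=
  Σ i : I, {μ : FDist Mod // ∀ m, μ.p m ≠ 0 → ∃ π, part (m, π) = some i}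

variable (Q : Mod → Pol → FDist Obs) (V : Mod → Pol → ℝ) (part : Mod × Pol → Option I)
  (η : ℝ)

theorem DECPhi_eq_iSup_netGain :
    DECPhi (fun m π => (Q m π).p) V part η =
      ⨆ μbar : FDist Mod, ⨅ p : FDist Pol, ⨆ i : I,
        ⨆ ν : {ν : FDist (Mod × Pol) // ∀ mp, ν.p mp ≠ 0 → part mp = some i},
          netGain η (∑ π, p.p π * pairRegret V ν.1 π)
            (expectedKL p (fun π => ν.1.mix fun mp => Q mp.1 π)
              fun π => μbar.mix fun m => Q m π) := by
  simp only [netGain_expectedKL]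
  rfl

theorem DECbar_eq_iSup_netGain :
    DECbar (fun m π => (Q m π).p) V part η =
      ⨆ μbar : {μ : FDist Mod // ∀ m, μ.p m ≠ 0 → ∃ i : I, ∃ π : Pol, part (m, π) = some i},
        ⨅ p : FDist Pol, ⨆ i : I,
          ⨆ μ : {μ : FDist Mod // ∀ m, μ.p m ≠ 0 → ∃ π : Pol, part (m, π) = some i},
            netGain η (∑ π, p.p π * regret V μ.1 π)
              (expectedKL p (fun π => μ.1.mix fun m => Q m π)
                fun π => μbar.1.mix fun m => Q m π) := by
  simp only [netGain_expectedKL]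
  rfl

variable {Q V part η}

theorem exists_lt_netGain_regret (hη : 0 < η) {c : ℝ}
    {Qbar : Pol → FDist Obs} {p : FDist Pol}
    (h : (c : EReal) < ⨆ i : I,
      ⨆ ν : {ν : FDist (Mod × Pol) // ∀ mp, ν.p mp ≠ 0 → part mp = some i},
        netGain η (∑ π, p.p π * pairRegret V ν.1 π)
          (expectedKL p (fun π => ν.1.mix fun mp => Q mp.1 π) Qbar)) :
    ∃ k : CellMixture part, ((c - CPhi V part : ℝ) : EReal) <
      netGain η (∑ π, p.p π * regret V k.2.1 π)
        (expectedKL p (fun π => k.2.1.mix fun m => Q m π) Qbar) := by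
  obtain ⟨i, hi⟩ := lt_iSup_iff.1 h
  obtain ⟨⟨ν, hν⟩, hlt⟩ := lt_iSup_iff.1 hi
  have hfst (m : Mod) (hm : ν.fst.p m ≠ 0) : ∃ π, part (m, π) = some i := by
    obtain ⟨π, -, hπ⟩ := Finset.exists_ne_zero_of_sum_ne_zero hm
    exact ⟨π, hν _ hπ⟩
  refine ⟨⟨i, ν.fst, hfst⟩, ?_⟩
  have hgain : ∑ π, p.p π * pairRegret V ν π - CPhi V part ≤ ∑ π, p.p π * regret V ν.fst π := by
    rw [← p.sum_mul_sub]
    gcongr with π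
    · exact p.nonneg π
    · exact pairRegret_sub_CPhi_le V part hν π
  simp only [FDist.fst_mix]
  refine lt_of_lt_of_le ?_ (netGain_mono hη hgain le_rfl)
  rw [sub_eq_add_neg, sub_eq_add_neg, netGain_add, EReal.coe_add]
  exact EReal.add_lt_add_right_coe hlt _

theorem DECPhi_le_DECbar_add [Nonempty Pol] (hη : 0 < η) :
    DECPhi (fun m π => (Q m π).p) V part η ≤
      DECbar (fun m π => (Q m π).p) V part η + (CPhi V part : EReal) := by
  rw [DECPhi_eq_iSup_netGain, DECbar_eq_iSup_netGain]
  refine iSup_le fun μbar => EReal.ge_of_forall_gt_iff_ge.1 fun c' hc' => ?_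
  obtain ⟨c, hc'c, hc⟩ := EReal.lt_iff_exists_real_btwn.1 hc'
  obtain ⟨ι, _, w, z, hwz⟩ := exists_mixture_le_netGain hη
    (fun (k : CellMixture part) π => regret_le V k.2.1 π)
    (sub_lt_sub_right (EReal.coe_lt_coe_iff.1 hc'c) (CPhi V part))
    fun p => exists_lt_netGain_regret hη (hc.trans_le (iInf_le _ p))
  have hsupp (m : Mod) (hm : (w.mix fun j => (z j).2.1).p m ≠ 0) :
      ∃ i : I, ∃ π : Pol, part (m, π) = some i := by
    obtain ⟨j, -, hj⟩ := FDist.exists_ne_zero_of_mix_ne_zero hm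
    exact ⟨(z j).1, (z j).2.2 m hj⟩
  rw [← EReal.sub_le_iff_le_add (.inl (EReal.coe_ne_bot _)) (.inl (EReal.coe_ne_top _))]
  refine le_iSup_of_le ⟨w.mix fun j => (z j).2.1, hsupp⟩ (le_iInf fun p => ?_)
  obtain ⟨j, hj⟩ := hwz p
  refine le_iSup₂_of_le (z j).1 (z j).2 ?_
  simpa only [FDist.mix_mix, EReal.coe_sub] using hj

end DEC

/-! ### Conditioning on the cells of a partition -/

section Cells

variable {X I : Type*} [Fintype X] [Fintype I] [DecidableEq I]

/-- The point mass at the cell of `x`. Points outside every cell, which will carry no mass, get the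
dummy value `ρ`. -/
def cellKernel (ρ : FDist I) (part : X → Option I) (x : X) : FDist I :=
  (part x).elim ρ FDist.pure

theorem mul_cellKernel (ρ : FDist I) {part : X → Option I} {ν : FDist X}
    (hν : ∀ x, part x = none → ν.p x = 0) (x : X) (i : I) :
    ν.p x * (cellKernel ρ part x).p i = if part x = some i then ν.p x else 0 := by
  rcases hx : part x with _ | j
  · simp [hν x hx]
  · simp [cellKernel, hx, FDist.pure, Pi.single_apply, eq_comm]

/-- The law of the cell of `x ∼ ν`. -/
def cellWeight (ρ : FDist I) (part : X → Option I) (ν : FDist X) : FDist I :=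
  ν.mix (cellKernel ρ part)

/-- The law `ν` conditioned on a cell. -/
def cellCond (ρ : FDist I) (part : X → Option I) (ν : FDist X) : I → FDist X :=
  ν.posterior (cellKernel ρ part)

variable {ρ : FDist I} {part : X → Option I} {ν : FDist X}

theorem cellWeight_mul_cellCond (hν : ∀ x, part x = none → ν.p x = 0) (i : I) (x : X) :
    (cellWeight ρ part ν).p i * (cellCond ρ part ν i).p x =
      if part x = some i then ν.p x else 0 :=
  (ν.mix_mul_posterior _ i x).trans (mul_cellKernel ρ hν x i)

theorem cellWeight_mix_cellCond : (cellWeight ρ part ν).mix (cellCond ρ part ν) = ν :=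
  ν.mix_posterior _

theorem part_eq_some_of_cellCond_ne_zero (hν : ∀ x, part x = none → ν.p x = 0) {i : I}
    (hi : (cellWeight ρ part ν).p i ≠ 0) {x : X} (hx : (cellCond ρ part ν i).p x ≠ 0) :
    part x = some i := by
  by_contra hpart
  refine mul_ne_zero hi hx ?_
  rw [cellWeight_mul_cellCond hν, if_neg hpart]

end Cells

section AIR

variable {Pol Obs Mod I : Type*} [Fintype Pol] [Fintype Obs] [Fintype Mod] [Fintype I]
  [DecidableEq I] {Q : Mod → Pol → FDist Obs} {V : Mod → Pol → ℝ} {part : Mod × Pol → Option I}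
  {η : ℝ} {ρ : FDist I} {ν : FDist (Mod × Pol)}

/-- The law of the observation after playing `π`, given the cell. -/
def cellObs (Q : Mod → Pol → FDist Obs) (part : Mod × Pol → Option I) (ρ : FDist I)
    (ν : FDist (Mod × Pol)) (i : I) (π : Pol) : FDist Obs :=
  (cellCond ρ part ν i).mix fun mp => Q mp.1 π

theorem cellWeight_mix_cellObs (π : Pol) :
    ((cellWeight ρ part ν).mix fun i => cellObs Q part ρ ν i π) = ν.mix fun mp => Q mp.1 π := by
  rw [← cellWeight_mix_cellCond (ρ := ρ) (part := part) (ν := ν), FDist.mix_mix,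
    cellWeight_mix_cellCond]
  rfl

theorem posterior_cellObs (hν : ∀ mp, part mp = none → ν.p mp = 0) {π : Pol} {o : Obs}
    (ho : (ν.mix fun mp => Q mp.1 π).p o ≠ 0) :
    ((cellWeight ρ part ν).posterior (fun i => cellObs Q part ρ ν i π) o).p =
      post (fun m π => (Q m π).p) part ν.p π o := by
  funext i
  rw [FDist.posterior_apply (by rwa [cellWeight_mix_cellObs]), cellWeight_mix_cellObs, post]
  simp only [cellObs, FDist.mix, Finset.mul_sum, ← mul_assoc, cellWeight_mul_cellCond hν, ite_mul,
    zero_mul]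

/-- The expected divergence from `ρ` of the posterior over cells, as it appears in `AIR`. -/
def posteriorCost (Q : Mod → Pol → FDist Obs) (part : Mod × Pol → Option I) (ρ : FDist I)
    (p : FDist Pol) (ν : FDist (Mod × Pol)) : ℝ≥0∞ :=
  ∑ π, ENNReal.ofReal (p.p π) * ∑ o, ENNReal.ofReal ((ν.mix fun mp => Q mp.1 π).p o) *
    ((cellWeight ρ part ν).posterior (fun i => cellObs Q part ρ ν i π) o).kl ρ

theorem mul_KL_post_eq_coe (hν : ∀ mp, part mp = none → ν.p mp = 0) (p : FDist Pol) (π : Pol)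
    (mp : Mod × Pol) (o : Obs) :
    ((p.p π * ν.p mp * (Q mp.1 π).p o : ℝ) : EReal) *
        KL (post (fun m π => (Q m π).p) part ν.p π o) ρ.p =
      ((ENNReal.ofReal (p.p π * ν.p mp * (Q mp.1 π).p o) *
        ((cellWeight ρ part ν).posterior (fun i => cellObs Q part ρ ν i π) o).kl ρ : ℝ≥0∞) :
          EReal) := by
  rw [FDist.coe_ofReal_mul_kl
    (mul_nonneg (mul_nonneg (p.nonneg π) (ν.nonneg mp)) ((Q mp.1 π).nonneg o))]
  rcases eq_or_ne ((ν.mix fun mp => Q mp.1 π).p o) 0 with ho | ho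
  · have hzero : ν.p mp * (Q mp.1 π).p o = 0 := by
      rcases eq_or_ne (ν.p mp) 0 with hmp | hmp
      · rw [hmp, zero_mul]
      · rw [ν.eq_zero_of_mix_eq_zero (fun mp => Q mp.1 π) hmp ho, mul_zero]
    simp only [mul_assoc, hzero, mul_zero, EReal.coe_zero, zero_mul]
  · rw [posterior_cellObs hν ho]

theorem sum_ofReal_joint_mul (Q : Mod → Pol → FDist Obs) (p : FDist Pol) (ν : FDist (Mod × Pol))
    (π : Pol) (D : Obs → ℝ≥0∞) :
    ∑ mp, ∑ o, ENNReal.ofReal (p.p π * ν.p mp * (Q mp.1 π).p o) * D o =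
      ENNReal.ofReal (p.p π) * ∑ o, ENNReal.ofReal ((ν.mix fun mp => Q mp.1 π).p o) * D o := by
  have hobs (o : Obs) : ∑ mp, ENNReal.ofReal (p.p π * ν.p mp * (Q mp.1 π).p o) =
      ENNReal.ofReal (p.p π) * ENNReal.ofReal ((ν.mix fun mp => Q mp.1 π).p o) := by
    rw [← ENNReal.ofReal_sum_of_nonneg fun mp _ =>
      mul_nonneg (mul_nonneg (p.nonneg π) (ν.nonneg mp)) ((Q mp.1 π).nonneg o),
      ← ENNReal.ofReal_mul (p.nonneg π)]
    simp only [FDist.mix, Finset.mul_sum, mul_assoc]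
  rw [Finset.sum_comm]
  simp only [← Finset.sum_mul, hobs]
  simp only [Finset.mul_sum, mul_assoc]

theorem AIR_eq_netGain (hν : ∀ mp, part mp = none → ν.p mp = 0) (p : FDist Pol) :
    AIR (fun m π => (Q m π).p) V part η ρ.p p.p ν.p =
      netGain η (∑ π, p.p π * pairRegret V ν π) (posteriorCost Q part ρ p ν) := by
  have hgain : ∑ π, ∑ mp, p.p π * ν.p mp * (V mp.1 mp.2 - V mp.1 π) =
      ∑ π, p.p π * pairRegret V ν π := by
    simp only [pairRegret_eq_sum, Finset.mul_sum, mul_assoc]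
  rw [AIR, hgain]
  simp only [mul_KL_post_eq_coe hν, ← ereal_coe_ennreal_sum, sum_ofReal_joint_mul]
  rfl

theorem sum_expectedKL_cellObs_le_posteriorCost (p : FDist Pol) :
    ∑ i, ENNReal.ofReal ((cellWeight ρ part ν).p i) *
        expectedKL p (cellObs Q part ρ ν i) (fun π => ν.mix fun mp => Q mp.1 π) ≤
      posteriorCost Q part ρ p ν := by
  simp only [← cellWeight_mix_cellObs (Q := Q) (part := part) (ρ := ρ)]
  rw [sum_mul_expectedKL_mix, posteriorCost]
  gcongr with π
  exact (FDist.mutualInfo_le_sum_kl_posterior _ _ ρ).trans_eq (by rw [cellWeight_mix_cellObs])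

theorem sum_mul_pairRegret_cellCond (p : FDist Pol) :
    ∑ i, (cellWeight ρ part ν).p i * ∑ π, p.p π * pairRegret V (cellCond ρ part ν i) π =
      ∑ π, p.p π * pairRegret V ν π := by
  rw [FDist.sum_mul_sum_comm]
  simp only [pairRegret_eq_sum, ← FDist.sum_mix_mul, cellWeight_mix_cellCond]

theorem AIRmaxmin_le_DECPhi (hη : 0 < η) :
    AIRmaxmin (fun m π => (Q m π).p) V part η ≤ DECPhi (fun m π => (Q m π).p) V part η := by
  rw [DECPhi_eq_iSup_netGain]
  refine iSup₂_le fun ρ ⟨ν, hν⟩ => le_iSup_of_le ν.fst (iInf_mono fun p => ?_)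
  obtain ⟨i, hi, hle⟩ := exists_netGain_sum_le hη (cellWeight ρ part ν)
    (fun i => ∑ π, p.p π * pairRegret V (cellCond ρ part ν i) π)
    (sum_expectedKL_cellObs_le_posteriorCost (Q := Q) p)
  rw [sum_mul_pairRegret_cellCond] at hle
  refine le_iSup₂_of_le i
    ⟨cellCond ρ part ν i, fun mp hmp => part_eq_some_of_cellCond_ne_zero hν hi hmp⟩ ?_
  simp only [FDist.fst_mix]
  exact (AIR_eq_netGain hν p).trans_le hle

end AIR

theorem DECPhi_le_DECbar_add_CPhi_general
    {Pol Obs Mod I : Type*}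
    [Fintype Pol] [Fintype Obs] [Fintype Mod] [Fintype I] [DecidableEq I] [Nonempty Pol]
    (q : Mod → Pol → Obs → ℝ)
    (hq : ∀ m π, (∀ o, 0 ≤ q m π o) ∧ ∑ o, q m π o = 1)
    (V : Mod → Pol → ℝ)
    (part : Mod × Pol → Option I)
    {η : ℝ} (hη : 0 < η) :
    DECPhi q V part η ≤ DECbar q V part η + ((CPhi V part : ℝ) : EReal) ∧
      (CPhi V part ≤ 0 → AIRmaxmin q V part η ≤ DECbar q V part η) := by
  let Q (m : Mod) (π : Pol) : FDist Obs := ⟨q m π, (hq m π).1, (hq m π).2⟩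
  have hDEC : DECPhi q V part η ≤ DECbar q V part η + (CPhi V part : EReal) :=
    DECPhi_le_DECbar_add (Q := Q) hη
  have hAIR : AIRmaxmin q V part η ≤ DECPhi q V part η := AIRmaxmin_le_DECPhi (Q := Q) hη
  refine ⟨hDEC, fun hC => ?_⟩
  calc AIRmaxmin q V part η ≤ DECPhi q V part η := hAIR
    _ ≤ DECbar q V part η + (CPhi V part : EReal) := hDEC
    _ ≤ DECbar q V part η + 0 := by gcongr; exact_mod_cast hC
    _ = DECbar q V part η := add_zero _

/-- **Lemma (`DEC^KL_η(𝓜,Φ) ≤ DEC^KL_η(𝓜̄(Φ)) + C(Φ)`).**  For every `η > 0`,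
the `Φ`-dependent DEC is bounded by the DEC of the `Φ`-aware convexification plus
`C(Φ)`; consequently if `C(Φ) ≤ 0` then
`max_{ρ∈Δ(Φ)} max_{ν∈Δ(Ψ)} min_{p∈Δ(Π)} AIR^Φ_{ρ,η}(p,ν) ≤ DEC^KL_η(𝓜̄(Φ))`. -/
theorem DECPhi_le_DECbar_add_CPhi
    {Pol Obs Mod I : Type*}
    [Fintype Pol] [Fintype Obs] [Fintype Mod] [Fintype I] [DecidableEq I]
    [Nonempty Pol] [Nonempty Obs] [Nonempty Mod]
    (q : Mod → Pol → Obs → ℝ)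
    (hq : ∀ m π, (∀ o, 0 ≤ q m π o) ∧ ∑ o, q m π o = 1)
    (V : Mod → Pol → ℝ)
    (hV : ∀ m π, V m π ∈ Set.Icc (0 : ℝ) 1)
    (part : Mod × Pol → Option I)
    (hnonempty : ∀ i : I, ∃ mp, part mp = some i)
    (η : ℝ) (hη : 0 < η) :
    DECPhi q V part η ≤ DECbar q V part η + ((CPhi V part : ℝ) : EReal) ∧
      (CPhi V part ≤ 0 → AIRmaxmin q V part η ≤ DECbar q V part η) :=
  DECPhi_le_DECbar_add_CPhi_general q hq V part hη
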